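/- Let ρ_AB be a density matrix on ℂ^{d_A} ⊗ ℂ^{d_B} with ρ_B positive definite, and let {|k⟩}_{k=1}^{d_A} be any orthonormal basis of ℂ^{d_A}. Then the pretty-good guessing probability is at least that of a uniformly random guess: Σ_{k=1}^{d_A} Tr[ρ_B^{−1/2} ρ_B^{k} ρ_B^{−1/2} ρ_B^{k}] ≥ 1/d_A, where ρ_B^{k} = Tr_A[(|k⟩⟨k| ⊗ I_B) ρ_AB]. -/

import Mathlib

open Matrix BigOperators ComplexOrder Kronecker

noncomputable section

/-- Partial trace over the first (A) tensor factor. -/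
def ptraceA {dA dB : ℕ} (ρ : Matrix (Fin dA × Fin dB) (Fin dA × Fin dB) ℂ) :
    Matrix (Fin dB) (Fin dB) ℂ :=
  Matrix.of fun i j => ∑ a : Fin dA, ρ (a, i) (a, j)

/-- `ρ_B^v = Tr_A[(|v⟩⟨v| ⊗ I_B) ρ]`. -/
def condB {dA dB : ℕ} (ρ : Matrix (Fin dA × Fin dB) (Fin dA × Fin dB) ℂ)
    (v : Fin dA → ℂ) : Matrix (Fin dB) (Fin dB) ℂ :=
  ptraceA (((vecMulVec v (star v)) ⊗ₖ (1 : Matrix (Fin dB) (Fin dB) ℂ)) * ρ)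

/-- Real power of a Hermitian matrix, via the spectral decomposition (junk value `0`
on non-Hermitian matrices). -/
def mpow {n : Type*} [Fintype n] [DecidableEq n] (M : Matrix n n ℂ) (r : ℝ) :
    Matrix n n ℂ :=
  if h : M.IsHermitian then
    (h.eigenvectorUnitary : Matrix n n ℂ) *
      Matrix.diagonal (fun i => ((h.eigenvalues i ^ r : ℝ) : ℂ)) *
      star (h.eigenvectorUnitary : Matrix n n ℂ)
  else 0

/-- `ρ̃_AB = (I_A ⊗ ρ_B^{-1/4}) ρ_AB (I_A ⊗ ρ_B^{-1/4})`. -/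
def tildeRho {dA dB : ℕ} (ρ : Matrix (Fin dA × Fin dB) (Fin dA × Fin dB) ℂ) :
    Matrix (Fin dA × Fin dB) (Fin dA × Fin dB) ℂ :=
  ((1 : Matrix (Fin dA) (Fin dA) ℂ) ⊗ₖ mpow (ptraceA ρ) (-(1/4 : ℝ))) * ρ *
    ((1 : Matrix (Fin dA) (Fin dA) ℂ) ⊗ₖ mpow (ptraceA ρ) (-(1/4 : ℝ)))

/-- The pretty-good guessing probability term for a single basis vector `v`:
`Tr[ρ_B^{-1/2} ρ_B^v ρ_B^{-1/2} ρ_B^v]`. -/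
def pgTerm {dA dB : ℕ} (ρ : Matrix (Fin dA × Fin dB) (Fin dA × Fin dB) ℂ)
    (v : Fin dA → ℂ) : ℂ :=
  (mpow (ptraceA ρ) (-(1/2 : ℝ)) * condB ρ v * mpow (ptraceA ρ) (-(1/2 : ℝ)) *
    condB ρ v).trace

end

noncomputable section

/-!
Put `X_k = ρ_B^{-1/4} ρ_B^k ρ_B^{-1/4}`, a Hermitian matrix. By cyclicity of the trace the `k`-th
term of the sum is the squared Hilbert-Schmidt norm `‖X_k‖²`, and since the `ρ_B^k` sum to `ρ_B`,
the `X_k` sum to `ρ_B^{1/2}`, whose squared norm is `Tr ρ_B = 1`. Cauchy-Schwarz gives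
`‖∑ X_k‖² ≤ d_A ∑ ‖X_k‖²`.
-/

lemma spectrum_real_pos_of_posDef {n 𝕜 : Type*} [Fintype n] [DecidableEq n] [RCLike 𝕜]
    {M : Matrix n n 𝕜} (hM : M.PosDef) {x : ℝ} (hx : x ∈ spectrum ℝ M) : 0 < x := by
  rw [hM.isHermitian.spectrum_real_eq_range_eigenvalues] at hx
  obtain ⟨i, rfl⟩ := hx
  exact hM.eigenvalues_pos i

section RealPower

variable {n : Type*} [Fintype n] [DecidableEq n] {M : Matrix n n ℂ}

lemma mpow_eq_cfc (hM : M.IsHermitian) (r : ℝ) : mpow M r = cfc (· ^ r : ℝ → ℝ) M := by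
  rw [hM.cfc_eq, mpow, dif_pos hM]
  rfl

lemma isHermitian_mpow (hM : M.IsHermitian) (r : ℝ) : (mpow M r).IsHermitian := by
  rw [mpow_eq_cfc hM]
  exact IsSelfAdjoint.cfc

lemma mpow_one (hM : M.IsHermitian) : mpow M 1 = M := by
  simp only [mpow_eq_cfc hM, Real.rpow_one, cfc_id' ℝ M hM.isSelfAdjoint]

lemma mpow_add (hM : M.PosDef) (r s : ℝ) : mpow M (r + s) = mpow M r * mpow M s := by
  have hcont (t : ℝ) : ContinuousOn (· ^ t : ℝ → ℝ) (spectrum ℝ M) :=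
    M.finite_real_spectrum.continuousOn _
  simp only [mpow_eq_cfc hM.isHermitian]
  rw [← cfc_mul _ _ M (hcont r) (hcont s)]
  exact cfc_congr fun x hx ↦ Real.rpow_add (spectrum_real_pos_of_posDef hM hx) r s

lemma mpow_mul_self_mul_mpow (hM : M.PosDef) (r s : ℝ) :
    mpow M r * M * mpow M s = mpow M (r + 1 + s) := by
  rw [mpow_add hM, mpow_add hM, mpow_one hM.isHermitian]

end RealPower

lemma sum_vecMulVec_star_eq_one {n R : Type*} [Fintype n] [DecidableEq n] [CommRing R] [StarRing R]
    {v : n → n → R} (horth : ∀ k k', star (v k) ⬝ᵥ v k' = if k = k' then 1 else 0) :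
    ∑ k, vecMulVec (v k) (star (v k)) = 1 := by
  set V : Matrix n n R := (of v)ᵀ
  have hV : Vᴴ * V = 1 := by
    ext k k'
    exact (horth k k').trans (one_apply ..).symm
  rw [← mul_eq_one_comm.mp hV]
  ext a c
  simp [V, Matrix.sum_apply, mul_apply, vecMulVec_apply]

section Conditional

variable {dA dB : ℕ} (ρ : Matrix (Fin dA × Fin dB) (Fin dA × Fin dB) ℂ)

lemma trace_ptraceA : (ptraceA ρ).trace = ρ.trace := by
  simp only [trace, diag_apply, ptraceA, of_apply, Fintype.sum_prod_type]
  exact Finset.sum_comm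

lemma condB_apply (v : Fin dA → ℂ) (i j : Fin dB) :
    condB ρ v i j = ∑ a, ∑ c, vecMulVec v (star v) a c * ρ (c, i) (a, j) := by
  simp [condB, ptraceA, mul_apply, Fintype.sum_prod_type, one_apply]

lemma conjTranspose_condB (v : Fin dA → ℂ) : (condB ρ v)ᴴ = condB ρᴴ v := by
  ext i j
  simp only [conjTranspose_apply, condB_apply, star_sum, star_mul', vecMulVec_apply, Pi.star_apply,
    star_star]
  rw [Finset.sum_comm]
  simp only [mul_comm (star (v _))]

lemma sum_condB {ι : Type*} [Fintype ι] {v : ι → Fin dA → ℂ}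
    (hv : ∑ k, vecMulVec (v k) (star (v k)) = 1) : ∑ k, condB ρ (v k) = ptraceA ρ := by
  ext i j
  simp only [Matrix.sum_apply, condB_apply]
  rw [Finset.sum_comm]
  simp only [Finset.sum_comm (s := (Finset.univ : Finset ι)), ← Finset.sum_mul,
    ← Matrix.sum_apply, hv]
  simp [ptraceA, one_apply]

end Conditional

section HilbertSchmidt

open scoped Matrix.Norms.Frobenius

lemma norm_sum_sq_le_card_mul_sum_norm_sq {ι E : Type*} [SeminormedAddCommGroup E]
    (s : Finset ι) (x : ι → E) : ‖∑ k ∈ s, x k‖ ^ 2 ≤ s.card * ∑ k ∈ s, ‖x k‖ ^ 2 :=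
  calc ‖∑ k ∈ s, x k‖ ^ 2 ≤ (∑ k ∈ s, ‖x k‖) ^ 2 := by gcongr; exact norm_sum_le s x
    _ ≤ s.card * ∑ k ∈ s, ‖x k‖ ^ 2 := sq_sum_le_card_mul_sum_sq

lemma trace_conjTranspose_mul_self_eq_frobenius_norm_sq {m n 𝕜 : Type*} [Fintype m] [Fintype n]
    [RCLike 𝕜] (A : Matrix m n 𝕜) : (Aᴴ * A).trace = ((‖A‖ ^ 2 : ℝ) : 𝕜) := by
  have hnorm : ‖A‖ ^ 2 = ∑ i, ∑ j, ‖A i j‖ ^ 2 := by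
    rw [frobenius_norm_def, ← Real.sqrt_eq_rpow, Real.sq_sqrt (by positivity)]
    simp only [Real.rpow_two]
  rw [hnorm, Finset.sum_comm]
  simp [trace, mul_apply, RCLike.conj_mul]

lemma trace_eq_frobenius_norm_mpow_half_sq {n : Type*} [Fintype n] [DecidableEq n]
    {M : Matrix n n ℂ} (hM : M.PosDef) : M.trace = ((‖mpow M (1 / 2)‖ ^ 2 : ℝ) : ℂ) := by
  have htrace := trace_conjTranspose_mul_self_eq_frobenius_norm_sq (mpow M (1 / 2))
  rwa [isHermitian_mpow hM.isHermitian, ← mpow_add hM, add_halves, mpow_one hM.isHermitian]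
    at htrace

variable {dA dB : ℕ} {ρ : Matrix (Fin dA × Fin dB) (Fin dA × Fin dB) ℂ}

lemma pgTerm_eq_frobenius_norm_sq (hρ : ρ.IsHermitian) (hρB : (ptraceA ρ).PosDef)
    (v : Fin dA → ℂ) :
    pgTerm ρ v =
      ((‖mpow (ptraceA ρ) (-(1 / 4)) * condB ρ v * mpow (ptraceA ρ) (-(1 / 4))‖ ^ 2 : ℝ) : ℂ) := by
  set R := mpow (ptraceA ρ) (-(1 / 4))
  set Z := condB ρ v
  have hR : Rᴴ = R := isHermitian_mpow hρB.isHermitian _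
  have hZ : Zᴴ = Z := by rw [conjTranspose_condB, hρ]
  have hsq : mpow (ptraceA ρ) (-(1 / 2)) = R * R := by
    rw [← mpow_add hρB]
    norm_num
  calc pgTerm ρ v = (R * (R * Z * R * R * Z)).trace := by
        simp only [pgTerm, hsq, Matrix.mul_assoc, Z]
    _ = (R * Z * R * R * Z * R).trace := trace_mul_comm _ _
    _ = ((R * Z * R)ᴴ * (R * Z * R)).trace := by
        simp only [conjTranspose_mul, hR, hZ, Matrix.mul_assoc]
    _ = _ := trace_conjTranspose_mul_self_eq_frobenius_norm_sq _

theorem pguess_ge_random_guess_general {ι : Type*} [Fintype ι] (hρ : ρ.IsHermitian)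
    (hρB : (ptraceA ρ).PosDef) {v : ι → Fin dA → ℂ}
    (hv : ∑ k, vecMulVec (v k) (star (v k)) = 1) :
    ρ.trace.re ≤ Fintype.card ι * (∑ k, pgTerm ρ (v k)).re := by
  set R := mpow (ptraceA ρ) (-(1 / 4))
  have hsum : ∑ k, R * condB ρ (v k) * R = mpow (ptraceA ρ) (1 / 2) := by
    rw [← Finset.sum_mul, ← Finset.mul_sum, sum_condB ρ hv, mpow_mul_self_mul_mpow hρB]
    norm_num
  calc ρ.trace.re = ‖∑ k, R * condB ρ (v k) * R‖ ^ 2 := by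
        rw [hsum, ← trace_ptraceA, trace_eq_frobenius_norm_mpow_half_sq hρB, Complex.ofReal_re]
    _ ≤ Fintype.card ι * ∑ k, ‖R * condB ρ (v k) * R‖ ^ 2 :=
        norm_sum_sq_le_card_mul_sum_norm_sq _ _
    _ = Fintype.card ι * (∑ k, pgTerm ρ (v k)).re := by
        simp only [pgTerm_eq_frobenius_norm_sq hρ hρB, Complex.re_sum, Complex.ofReal_re, R]

end HilbertSchmidt

/-- the pretty-good guessing probability for any orthonormal basis
measurement on `A` is at least that of a uniformly random guess:
`Σ_k Tr[ρ_B^{-1/2} ρ_B^k ρ_B^{-1/2} ρ_B^k] ≥ 1/d_A`. -/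
theorem pguess_ge_random_guess
    (dA dB : ℕ) (hdA : 1 ≤ dA) (hdB : 1 ≤ dB)
    (ρ : Matrix (Fin dA × Fin dB) (Fin dA × Fin dB) ℂ)
    (hρ : ρ.PosSemidef) (hρtr : ρ.trace = 1)
    (hρB : (ptraceA ρ).PosDef)
    (v : Fin dA → (Fin dA → ℂ))
    (horth : ∀ k k', star (v k) ⬝ᵥ v k' = if k = k' then (1 : ℂ) else 0) :
    (1 : ℝ) / dA ≤ (∑ k : Fin dA, pgTerm ρ (v k)).re := by
  rw [div_le_iff₀' (by exact_mod_cast hdA)]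
  simpa [hρtr] using
    pguess_ge_random_guess_general hρ.isHermitian hρB (sum_vecMulVec_star_eq_one horth)

end
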